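/- Let N ≥ 1, r > 0, 0 < d ≤ 2r, x₁ ∈ ℝ and y₁ ≤ y₂. For i = 1,…,N let Sᵢ = {x₁ + (i−1)·d} × [y₁, y₂] be the vertical segment traced by robot i. Then the rectangle A = [x₁ − r, x₁ + (N−1)·d + r] × [y₁, y₂] satisfies A ⊆ ⋃ᵢ {p ∈ ℝ² | infDist p Sᵢ ≤ r}; i.e., if the robots track the N parallel vertical lines with spacing d, the entire rectangle A is covered by their sensors of radius r. -/

import Mathlib

/-!
Consecutive sensing intervals of radius `r` about the robots' abscissae overlap because the spacing
is at most `2 * r`, so together they fill the horizontal extent of the rectangle. A point of the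
rectangle is therefore within `r` horizontally of some track, and moving it horizontally onto that
track changes a single coordinate, so the distance moved is exactly this horizontal one.
-/

open Set

theorem Icc_subset_biUnion_Icc_of_succ_le {α : Type*} [LinearOrder α] {a b : ℕ → α} {m n : ℕ}
    (hmn : m ≤ n) (hab : ∀ i ∈ Ico m n, a (i + 1) ≤ b i) :
    Icc (a m) (b n) ⊆ ⋃ i ∈ Finset.Icc m n, Icc (a i) (b i) := by
  induction n, hmn using Nat.le_induction with
  | base => simp
  | succ n hmn ih =>
    intro x hx
    rw [← Finset.insert_Icc_right_eq_Icc_add_one (Nat.le_succ_of_le hmn), Finset.set_biUnion_insert]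
    rcases le_total x (b n) with hxn | hnx
    · exact .inr (ih (fun i hi ↦ hab i ⟨hi.1, hi.2.trans n.lt_succ_self⟩) ⟨hx.1, hxn⟩)
    · exact .inl ⟨(hab n ⟨hmn, n.lt_succ_self⟩).trans hnx, hx.2⟩

theorem Icc_subset_biUnion_closedBall {c : ℕ → ℝ} {r : ℝ} {m n : ℕ} (hmn : m ≤ n)
    (hc : ∀ i ∈ Ico m n, c (i + 1) ≤ c i + 2 * r) :
    Icc (c m - r) (c n + r) ⊆ ⋃ i ∈ Finset.Icc m n, Metric.closedBall (c i) r := by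
  simp only [Real.closedBall_eq_Icc]
  exact Icc_subset_biUnion_Icc_of_succ_le (a := (c · - r)) (b := (c · + r)) hmn
    fun i hi ↦ by linarith [hc i hi]

section PiLp

variable {ι : Type*} [Fintype ι] [DecidableEq ι] {p : ENNReal} [Fact (1 ≤ p)]

theorem dist_toLp_update {β : ι → Type*} [∀ i, SeminormedAddCommGroup (β i)]
    (x : PiLp p β) (i : ι) (a : β i) :
    dist x (WithLp.toLp p (Function.update x i a)) = dist (x i) a := by
  have sub_update : x - WithLp.toLp p (Function.update x i a) =
      PiLp.single p i (x i - a) := by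
    ext k
    rcases eq_or_ne k i with rfl | hk <;> simp [*]
  rw [dist_eq_norm, sub_update, PiLp.norm_single, dist_eq_norm]

theorem sweep_covers_rectangle_general {c : ℕ → ℝ} {r : ℝ} {m n : ℕ} (hmn : m ≤ n)
    (hc : ∀ i ∈ Ico m n, c (i + 1) ≤ c i + 2 * r) (j : ι) {U : Set (PiLp p fun _ : ι ↦ ℝ)}
    (hU : ∀ x ∈ U, ∀ t : ℝ, WithLp.toLp p (Function.update x j t) ∈ U) :
    {x | x j ∈ Icc (c m - r) (c n + r) ∧ x ∈ U} ⊆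
      ⋃ i ∈ Finset.Icc m n, {x | Metric.infDist x {y | y j = c i ∧ y ∈ U} ≤ r} := by
  rintro x ⟨hxj, hxU⟩
  obtain ⟨i, hi, hxi⟩ := mem_iUnion₂.mp (Icc_subset_biUnion_closedBall hmn hc hxj)
  have foot_mem : WithLp.toLp p (Function.update x j (c i)) ∈ {y | y j = c i ∧ y ∈ U} :=
    ⟨Function.update_self .., hU x hxU (c i)⟩
  refine mem_iUnion₂_of_mem hi ?_
  calc
    Metric.infDist x {y | y j = c i ∧ y ∈ U}
      ≤ dist x (WithLp.toLp p (Function.update x j (c i))) :=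
        Metric.infDist_le_dist_of_mem foot_mem
    _ = dist (x j) (c i) := dist_toLp_update x j (c i)
    _ ≤ r := hxi

end PiLp

/-- If `N` robots with certainty-sensing radius `r` track the parallel vertical
segments `Sᵢ = {x₁ + (i-1)d} × [y₁, y₂]` with spacing `0 < d ≤ 2r`, then the
whole rectangle `A = [x₁ - r, x₁ + (N-1)d + r] × [y₁, y₂]` is covered. -/
theorem sweep_covers_rectangle
    (N : ℕ) (hN : 1 ≤ N) (r d : ℝ) (hr : 0 < r) (hd : 0 < d) (hdr : d ≤ 2 * r)
    (x₁ y₁ y₂ : ℝ) (hy : y₁ ≤ y₂)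
    (S : ℕ → Set (EuclideanSpace ℝ (Fin 2)))
    (hS : ∀ i, S i = {p : EuclideanSpace ℝ (Fin 2) |
      p 0 = x₁ + ((i : ℝ) - 1) * d ∧ p 1 ∈ Set.Icc y₁ y₂}) :
    {p : EuclideanSpace ℝ (Fin 2) |
        p 0 ∈ Set.Icc (x₁ - r) (x₁ + (N - 1 : ℝ) * d + r) ∧ p 1 ∈ Set.Icc y₁ y₂} ⊆
      ⋃ i ∈ Finset.Icc 1 N, {p : EuclideanSpace ℝ (Fin 2) | Metric.infDist p (S i) ≤ r} := by
  have spacing : ∀ i ∈ Ico 1 N,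
      x₁ + (((i + 1 : ℕ) : ℝ) - 1) * d ≤ x₁ + ((i : ℝ) - 1) * d + 2 * r := by
    intro i _
    push_cast
    linarith
  simpa [hS] using sweep_covers_rectangle_general (p := 2) (c := fun i ↦ x₁ + ((i : ℝ) - 1) * d)
    hN spacing 0 (U := {p | p 1 ∈ Icc y₁ y₂}) (by simp)
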